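/- Let (T_i)_{i=1}^∞ be a sequence of bounded linear operators from a separable Banach space X to a normed linear space Y. The following are equivalent: (1) (T_i) is densely mean Li-Yorke δ-chaotic for some δ>0; (2) (T_i) is densely mean Li-Yorke extremely chaotic; (3) the set of mean Li-Yorke extreme pairs is dense in X×X; (4) the set of mean Li-Yorke extreme pairs is residual in X×X; (5) the set of absolutely mean irregular vectors is dense in X; (6) the set of absolutely mean irregular vectors is residual in X; (7) the mean proximal relation MProx(T_i) is dense in X×X and (T_i) is mean sensitive. -/

import Mathlib

open Filter Topology

variable {X Y : Type*} [NormedAddCommGroup X] [NormedSpace ℝ X]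
  [NormedAddCommGroup Y] [NormedSpace ℝ Y]

/-- The Cesàro average `(1/n) ∑_{i=1}^{n} ‖T i x - T i y‖`. -/
noncomputable def mavg (T : ℕ → X →L[ℝ] Y) (x y : X) (n : ℕ) : ℝ :=
  (∑ i ∈ Finset.Icc 1 n, ‖T i x - T i y‖) / n

/-- The Cesàro average `(1/n) ∑_{i=1}^{n} ‖T i x‖`. -/
noncomputable def avg (T : ℕ → X →L[ℝ] Y) (x : X) (n : ℕ) : ℝ :=
  (∑ i ∈ Finset.Icc 1 n, ‖T i x‖) / n

/-- `limsup_n (1/n) ∑_{i=1}^{n} ‖T i x - T i y‖`, computed in `EReal`. -/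
noncomputable def msup (T : ℕ → X →L[ℝ] Y) (x y : X) : EReal :=
  Filter.limsup (fun n => (mavg T x y n : EReal)) Filter.atTop

/-- `liminf_n (1/n) ∑_{i=1}^{n} ‖T i x - T i y‖`, computed in `EReal`. -/
noncomputable def minf (T : ℕ → X →L[ℝ] Y) (x y : X) : EReal :=
  Filter.liminf (fun n => (mavg T x y n : EReal)) Filter.atTop

/-- `limsup_n (1/n) ∑_{i=1}^{n} ‖T i x‖`, computed in `EReal`. -/
noncomputable def asup (T : ℕ → X →L[ℝ] Y) (x : X) : EReal :=
  Filter.limsup (fun n => (avg T x n : EReal)) Filter.atTop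

/-- `liminf_n (1/n) ∑_{i=1}^{n} ‖T i x‖`, computed in `EReal`. -/
noncomputable def ainf (T : ℕ → X →L[ℝ] Y) (x : X) : EReal :=
  Filter.liminf (fun n => (avg T x n : EReal)) Filter.atTop

/-- Mean sensitivity of the sequence `(T i)`. -/
def MeanSensitive (T : ℕ → X →L[ℝ] Y) : Prop :=
  ∃ δ : ℝ, 0 < δ ∧ ∀ x : X, ∀ ε : ℝ, 0 < ε →
    ∃ y : X, ‖x - y‖ < ε ∧ (δ : EReal) < msup T x y

section helpers

theorem mavg_eq (T : ℕ → X →L[ℝ] Y) (x y : X) : mavg T x y = avg T (x - y) := by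
  funext n
  simp [mavg, avg]

theorem msup_eq (T : ℕ → X →L[ℝ] Y) (x y : X) : msup T x y = asup T (x - y) := by
  simp [msup, asup, mavg_eq]

theorem minf_eq (T : ℕ → X →L[ℝ] Y) (x y : X) : minf T x y = ainf T (x - y) := by
  simp [minf, ainf, mavg_eq]

theorem avg_nonneg' (T : ℕ → X →L[ℝ] Y) (x : X) (n : ℕ) : 0 ≤ avg T x n := by
  unfold avg
  positivity

theorem avg_continuous (T : ℕ → X →L[ℝ] Y) (n : ℕ) : Continuous (fun x => avg T x n) := by
  unfold avg
  fun_prop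

theorem avg_sub_le (T : ℕ → X →L[ℝ] Y) (x y : X) (n : ℕ) :
    avg T (x - y) n ≤ avg T x n + avg T y n := by
  unfold avg
  rw [← add_div, ← Finset.sum_add_distrib]
  gcongr
  rw [map_sub]
  exact norm_sub_le _ _

theorem avg_neg' (T : ℕ → X →L[ℝ] Y) (x : X) : avg T (-x) = avg T x := by
  funext n
  simp [avg]

theorem avg_smul' (T : ℕ → X →L[ℝ] Y) (c : ℝ) (x : X) (n : ℕ) :
    avg T (c • x) n = |c| * avg T x n := by
  simp only [avg, map_smul, norm_smul, Real.norm_eq_abs]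
  rw [← Finset.mul_sum, mul_div_assoc]

theorem ainf_eq_zero_iff (T : ℕ → X →L[ℝ] Y) (x : X) :
    ainf T x = 0 ↔ ∀ k N : ℕ, ∃ n ≥ N, avg T x n < 1 / ((k : ℝ) + 1) := by
  have h0 : 0 ≤ ainf T x := by
    unfold ainf
    refine le_liminf_of_le (by isBoundedDefault) (Eventually.of_forall fun n => ?_)
    exact_mod_cast avg_nonneg' T x n
  rw [← h0.ge_iff_eq', ainf, liminf_le_iff]
  constructor
  · intro h k N
    have hk : ((1 / ((k : ℝ) + 1) : ℝ) : EReal) > 0 := by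
      have : (0 : ℝ) < 1 / ((k : ℝ) + 1) := by positivity
      exact_mod_cast this
    obtain ⟨n, hn, h'⟩ := frequently_atTop.1 (h _ hk) N
    exact ⟨n, hn, by exact_mod_cast h'⟩
  · intro h y hy
    obtain ⟨r, hr, hry⟩ := EReal.lt_iff_exists_real_btwn.1 hy
    have hr' : (0 : ℝ) < r := by exact_mod_cast hr
    obtain ⟨k, hk⟩ := exists_nat_one_div_lt hr'
    refine frequently_atTop.2 fun N => ?_
    obtain ⟨n, hn, h'⟩ := h k N
    refine ⟨n, hn, lt_trans ?_ hry⟩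
    exact_mod_cast h'.trans hk

theorem asup_eq_top_iff (T : ℕ → X →L[ℝ] Y) (x : X) :
    asup T x = ⊤ ↔ ∀ k N : ℕ, ∃ n ≥ N, (k : ℝ) < avg T x n := by
  rw [← top_le_iff, asup, le_limsup_iff]
  constructor
  · intro h k N
    obtain ⟨n, hn, h'⟩ := frequently_atTop.1 (h ((k : ℝ) : EReal) (EReal.coe_lt_top _)) N
    exact ⟨n, hn, by exact_mod_cast h'⟩
  · intro h y hy
    obtain ⟨r, hyr, hr⟩ := EReal.lt_iff_exists_real_btwn.1 hy
    obtain ⟨k, hk⟩ := exists_nat_gt r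
    refine frequently_atTop.2 fun N => ?_
    obtain ⟨n, hn, h'⟩ := h k N
    refine ⟨n, hn, lt_trans hyr ?_⟩
    exact_mod_cast hk.trans h'

theorem isGdelta_prox (T : ℕ → X →L[ℝ] Y) : IsGδ {x : X | ainf T x = 0} := by
  have : {x : X | ainf T x = 0} =
      ⋂ k : ℕ, ⋂ N : ℕ, ⋃ n ≥ N, {x | avg T x n < 1 / ((k : ℝ) + 1)} := by
    ext x
    simp [ainf_eq_zero_iff]
  rw [this]
  refine IsGδ.iInter fun k => IsGδ.iInter_of_isOpen fun N => ?_
  exact isOpen_biUnion fun n _ => isOpen_lt (avg_continuous T n) continuous_const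

theorem isOpen_big (T : ℕ → X →L[ℝ] Y) (k N : ℕ) :
    IsOpen (⋃ n ≥ N, {x | (k : ℝ) < avg T x n}) :=
  isOpen_biUnion fun n _ => isOpen_lt continuous_const (avg_continuous T n)

theorem asup_set_eq (T : ℕ → X →L[ℝ] Y) : {x : X | asup T x = ⊤} =
    ⋂ k : ℕ, ⋂ N : ℕ, ⋃ n ≥ N, {x | (k : ℝ) < avg T x n} := by
  ext x
  simp [asup_eq_top_iff]

theorem isGdelta_unbdd (T : ℕ → X →L[ℝ] Y) : IsGδ {x : X | asup T x = ⊤} := by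
  rw [asup_set_eq]
  exact IsGδ.iInter fun k => IsGδ.iInter_of_isOpen fun N => isOpen_big T k N

theorem isGdelta_irr (T : ℕ → X →L[ℝ] Y) : IsGδ {x : X | ainf T x = 0 ∧ asup T x = ⊤} :=
  (isGdelta_prox T).inter (isGdelta_unbdd T)

theorem isOpenMap_sub' [CompleteSpace X] : IsOpenMap (fun p : X × X => p.1 - p.2) := by
  have := (ContinuousLinearMap.fst ℝ X X - ContinuousLinearMap.snd ℝ X X).isOpenMap
    (fun x => ⟨(x, 0), by simp⟩)
  exact this

theorem surj_sub' : Function.Surjective (fun p : X × X => p.1 - p.2) :=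
  fun x => ⟨(x, 0), by simp⟩

theorem dense_pairs_iff [CompleteSpace X] (I : Set X) :
    Dense {p : X × X | p.1 - p.2 ∈ I} ↔ Dense I := by
  constructor
  · intro h
    have := surj_sub'.denseRange.dense_image (by fun_prop) h
    refine this.mono ?_
    rintro _ ⟨p, hp, rfl⟩
    exact hp
  · intro h
    exact h.preimage isOpenMap_sub'

theorem dense_unbdd [CompleteSpace X] (T : ℕ → X →L[ℝ] Y) (h : MeanSensitive T) :
    Dense {x : X | asup T x = ⊤} := by
  obtain ⟨δ, hδ, h⟩ := h
  rw [asup_set_eq]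
  refine dense_iInter_of_Gδ (fun k => IsGδ.iInter_of_isOpen fun N => isOpen_big T k N) fun k => ?_
  refine dense_iInter_of_isOpen (fun N => isOpen_big T k N) fun N => ?_
  rw [Metric.dense_iff]
  intro x r hr
  set c : ℝ := (2 * k + 1) / δ with hc
  have hcpos : 0 < c := by positivity
  obtain ⟨y, hy, hyδ⟩ := h 0 (r / c) (by positivity)
  rw [msup_eq] at hyδ
  have hf := frequently_lt_of_lt_limsup (by isBoundedDefault) hyδ
  obtain ⟨n, hn, h'⟩ := frequently_atTop.1 hf N
  have h2 : δ < avg T (0 - y) n := by exact_mod_cast h'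
  rw [zero_sub, avg_neg'] at h2
  have h3 : 2 * (k : ℝ) < avg T (c • y) n := by
    rw [avg_smul', abs_of_pos hcpos]
    have : c * δ < c * avg T y n := by gcongr
    have h4 : c * δ = 2 * k + 1 := by rw [hc]; field_simp
    linarith
  have h5 := avg_sub_le T (x + c • y) x n
  rw [add_sub_cancel_left] at h5
  by_cases h6 : (k : ℝ) < avg T x n
  · exact ⟨x, Metric.mem_ball_self hr, by simp only [Set.mem_iUnion]; exact ⟨n, hn, h6⟩⟩
  · refine ⟨x + c • y, ?_, ?_⟩
    · rw [Metric.mem_ball, dist_eq_norm, add_sub_cancel_left, norm_smul, Real.norm_eq_abs,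
        abs_of_pos hcpos]
      rw [zero_sub, norm_neg, lt_div_iff₀ hcpos] at hy
      linarith
    · simp only [Set.mem_iUnion]
      refine ⟨n, hn, ?_⟩
      show (k : ℝ) < _
      linarith

/-- A Mycielski-type statement for symmetric dense Gδ sets not containing zero. -/
theorem exists_scrambled [CompleteSpace X] [TopologicalSpace.SeparableSpace X] (I : Set X)
    (hG : IsGδ I) (hd : Dense I) (h0 : (0 : X) ∉ I) (hneg : ∀ x ∈ I, -x ∈ I) :
    ∃ K : Set X, Dense K ∧ ¬ K.Countable ∧ K.Pairwise (fun x y => x - y ∈ I) := by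
  have key : ∀ C : Set X, C.Countable → ∀ U : Set X, IsOpen U → U.Nonempty →
      ∃ x ∈ U, ∀ c ∈ C, x - c ∈ I := by
    intro C hC U hU hUn
    have : Dense (⋂ c ∈ C, (fun x => x - c) ⁻¹' I) := by
      refine dense_biInter_of_Gδ (fun c _ => hG.preimage (by fun_prop)) hC fun c _ => ?_
      exact hd.preimage (Homeomorph.subRight c).isOpenMap
    obtain ⟨x, hxU, hx⟩ := this.inter_open_nonempty U hU hUn
    refine ⟨x, hxU, ?_⟩
    simpa using hx
  have hins : ∀ (C : Set X) (x : X), C.Pairwise (fun x y => x - y ∈ I) →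
      (∀ c ∈ C, x - c ∈ I) → (insert x C).Pairwise (fun x y => x - y ∈ I) := by
    intro C x hC hx
    rw [Set.pairwise_insert]
    refine ⟨hC, fun b hb _ => ⟨hx b hb, ?_⟩⟩
    simpa using hneg _ (hx b hb)
  haveI : SecondCountableTopology X := UniformSpace.secondCountable_of_separable X
  let B := TopologicalSpace.countableBasis X
  obtain ⟨D, hDc, hDd, hDp⟩ : ∃ D : Set X, D.Countable ∧ Dense D ∧
      D.Pairwise (fun x y => x - y ∈ I) := by
    obtain ⟨u, hu⟩ := TopologicalSpace.exists_dense_seq X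
    have ex : ∀ (q : ℕ × ℕ) (C : {C : Set X // C.Countable}),
        ∃ x ∈ Metric.ball (u q.1) (1 / ((q.2 : ℝ) + 1)), ∀ c ∈ C.1, x - c ∈ I := fun q C =>
      key C.1 C.2 _ Metric.isOpen_ball ⟨u q.1, Metric.mem_ball_self (by positivity)⟩
    choose g hgU hgI using ex
    let F : ℕ → {C : Set X // C.Countable} := fun n => Nat.rec ⟨∅, Set.countable_empty⟩
      (fun n C => ⟨insert (g (Nat.unpair n) C) C.1, C.2.insert _⟩) n
    have hF : ∀ n, (F (n + 1)).1 = insert (g (Nat.unpair n) (F n)) (F n).1 := fun n => rfl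
    have hmono : Monotone (fun n => (F n).1) := monotone_nat_of_le_succ fun n => by
      show (F n).1 ⊆ (F (n + 1)).1
      rw [hF]
      exact Set.subset_insert _ _
    refine ⟨⋃ n, (F n).1, Set.countable_iUnion fun n => (F n).2, ?_, ?_⟩
    · rw [Metric.dense_iff]
      intro x r hr
      obtain ⟨i, hi⟩ := hu.exists_dist_lt x (half_pos hr)
      obtain ⟨k, hk⟩ := exists_nat_one_div_lt (half_pos hr)
      have h1 := hgU (i, k) (F (Nat.pair i k))
      refine ⟨g (i, k) (F (Nat.pair i k)), ?_, ?_⟩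
      · rw [Metric.mem_ball] at h1 ⊢
        have := dist_triangle (g (i, k) (F (Nat.pair i k))) (u i) x
        rw [dist_comm] at hi
        simp only at h1
        linarith
      · refine Set.mem_iUnion.2 ⟨Nat.pair i k + 1, ?_⟩
        rw [hF, Nat.unpair_pair]
        exact Set.mem_insert _ _
    · rw [Set.pairwise_iUnion hmono.directed_le]
      intro n
      induction n with
      | zero => exact Set.pairwise_empty _
      | succ n ih =>
        rw [hF]
        exact hins _ _ ih (hgI _ _)
  obtain ⟨K, hDK, hK⟩ := zorn_subset_nonempty {K : Set X | K.Pairwise (fun x y => x - y ∈ I)}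
    (fun c hc hch _ => ⟨⋃₀ c, (Set.pairwise_sUnion hch.directedOn).2 hc,
      fun s hs => Set.subset_sUnion_of_mem hs⟩) D hDp
  refine ⟨K, hDd.mono hDK, fun hKc => ?_, hK.prop⟩
  obtain ⟨x, -, hx⟩ := key K hKc Set.univ isOpen_univ Set.univ_nonempty
  have hxK : x ∈ K := hK.le_of_ge (hins K x hK.prop hx) (Set.subset_insert _ _)
    (Set.mem_insert _ _)
  apply h0
  simpa using hx x hxK

end helpers

/-- **Characterizations of dense mean Li-Yorke extreme chaos** for a sequence of
bounded linear operators from a separable Banach space to a normed space. -/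
theorem denselyMeanLiYorkeChaotic_tfae [CompleteSpace X] [TopologicalSpace.SeparableSpace X]
    (T : ℕ → X →L[ℝ] Y) :
    List.TFAE [
      ∃ δ : ℝ, 0 < δ ∧ ∃ K : Set X, Dense K ∧ ¬ K.Countable ∧
        ∀ x ∈ K, ∀ y ∈ K, x ≠ y → (minf T x y = 0 ∧ (δ : EReal) ≤ msup T x y),
      ∃ K : Set X, Dense K ∧ ¬ K.Countable ∧
        ∀ x ∈ K, ∀ y ∈ K, x ≠ y → (minf T x y = 0 ∧ msup T x y = ⊤),
      Dense {p : X × X | minf T p.1 p.2 = 0 ∧ msup T p.1 p.2 = ⊤},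
      {p : X × X | minf T p.1 p.2 = 0 ∧ msup T p.1 p.2 = ⊤} ∈ residual (X × X),
      Dense {x : X | ainf T x = 0 ∧ asup T x = ⊤},
      {x : X | ainf T x = 0 ∧ asup T x = ⊤} ∈ residual X,
      Dense {p : X × X | minf T p.1 p.2 = 0} ∧ MeanSensitive T] := by
  simp only [minf_eq, msup_eq]
  have hI0 : (0 : X) ∉ {x : X | ainf T x = 0 ∧ asup T x = ⊤} := by
    rintro ⟨-, h⟩
    rw [asup_eq_top_iff] at h
    obtain ⟨n, -, hn⟩ := h 0 0
    simp [avg] at hn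
  have hP0 : ainf T (0 : X) = 0 := by
    rw [ainf_eq_zero_iff]
    intro k N
    refine ⟨N, le_rfl, ?_⟩
    have : avg T (0 : X) N = 0 := by simp [avg]
    rw [this]
    positivity
  have hIneg : ∀ x ∈ {x : X | ainf T x = 0 ∧ asup T x = ⊤},
      -x ∈ {x : X | ainf T x = 0 ∧ asup T x = ⊤} := by
    intro x hx
    simpa [ainf, asup, avg_neg'] using hx
  tfae_have 2 → 1 := by
    rintro ⟨K, hd, hc, h⟩
    refine ⟨1, one_pos, K, hd, hc, fun x hx y hy hxy => ?_⟩
    obtain ⟨h1, h2⟩ := h x hx y hy hxy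
    exact ⟨h1, by rw [h2]; exact le_top⟩
  tfae_have 1 → 7 := by
    rintro ⟨δ, hδ, K, hd, hc, h⟩
    refine ⟨(hd.prod hd).mono ?_, δ / 2, half_pos hδ, fun x ε hε => ?_⟩
    · rintro ⟨x, y⟩ ⟨hx, hy⟩
      by_cases hxy : x = y
      · simp [hxy, hP0]
      · exact (h x hx y hy hxy).1
    · haveI : Nontrivial X := by
        by_contra hn
        rw [not_nontrivial_iff_subsingleton] at hn
        exact hc (Set.subsingleton_of_subsingleton).countable
      obtain ⟨v, hv⟩ := exists_norm_eq X (show (0 : ℝ) ≤ ε / 4 by positivity)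
      obtain ⟨a, haK, ha⟩ := hd.exists_dist_lt 0 (show 0 < ε / 8 by positivity)
      obtain ⟨b, hbK, hb⟩ := hd.exists_dist_lt v (show 0 < ε / 8 by positivity)
      have hab : a ≠ b := by
        rintro rfl
        have := dist_triangle_right v 0 a
        rw [dist_zero_right] at this
        linarith
      have hnab : ‖a - b‖ < ε := by
        have h1 := dist_triangle4 a 0 v b
        rw [dist_comm a 0, dist_zero_left v, dist_eq_norm a b] at h1
        linarith
      refine ⟨x - (a - b), by simpa using hnab, ?_⟩
      rw [msup_eq, sub_sub_cancel]
      refine lt_of_lt_of_le ?_ (h a haK b hbK hab).2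
      exact_mod_cast half_lt_self hδ
  tfae_have 7 → 5 := by
    rintro ⟨h1, h2⟩
    exact Dense.inter_of_Gδ (isGdelta_prox T) (isGdelta_unbdd T)
      ((dense_pairs_iff {x : X | ainf T x = 0}).1 h1) (dense_unbdd T h2)
  tfae_have 5 → 2 := by
    intro h
    obtain ⟨K, h1, h2, h3⟩ := exists_scrambled _ (isGdelta_irr T) h hI0 hIneg
    exact ⟨K, h1, h2, fun x hx y hy hxy => h3 hx hy hxy⟩
  tfae_have 5 → 6 := residual_of_dense_Gδ (isGdelta_irr T)
  tfae_have 6 → 5 := dense_of_mem_residual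
  tfae_have 3 ↔ 5 := dense_pairs_iff {x : X | ainf T x = 0 ∧ asup T x = ⊤}
  tfae_have 3 → 4 := by
    intro h
    refine residual_of_dense_Gδ ?_ h
    exact (isGdelta_irr T).preimage (f := fun p : X × X => p.1 - p.2) (by fun_prop)
  tfae_have 4 → 3 := dense_of_mem_residual
  tfae_finish
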